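/- Let f : 2^V → ℝ be a symmetric submodular function on a finite set V of cardinality n ≥ 2, and let (v_1, …, v_n) be a maximum adjacency ordering (MA-ordering) of V with respect to f. Then (v_{n−1}, v_n) is a pendent pair of f, i.e., f(X) ≥ f({v_n}) for every subset X ⊊ V with |X ∩ {v_{n−1}, v_n}| = 1. -/

import Mathlib

open Finset

def Submodular {V : Type*} [DecidableEq V] [Fintype V] (f : Finset V → ℝ) : Prop :=
  ∀ X Y : Finset V, f X + f Y ≥ f (X ∪ Y) + f (X ∩ Y)

def prefSet {V : Type*} [DecidableEq V] {n : ℕ} (v : Fin n → V) (i : Fin n) : Finset V :=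
  (Finset.univ.filter (fun k : Fin n => k < i)).image v

/-- An ordering `(v 0, …, v (n-1))` of `V` is a maximum adjacency ordering (MA-ordering)
with respect to `f` if `f {v_i} - f (V_{i-1} ∪ {v_i}) ≥ f {v_j} - f (V_{i-1} ∪ {v_j})`
for all `i ≤ j`. -/
def IsMAOrdering {V : Type*} [DecidableEq V] {n : ℕ} (f : Finset V → ℝ) (v : Fin n → V) : Prop :=
  ∀ i j : Fin n, i ≤ j →
    f {v i} - f (insert (v i) (prefSet v i)) ≥
      f {v j} - f (insert (v j) (prefSet v i))

/-- A pair `(u, w)` of distinct elements of `V` is a pendent pair of `f` if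
`f X ≥ f {w}` for every `X ⊊ V` with `|X ∩ {u, w}| = 1`. -/
def PendentPair {V : Type*} [DecidableEq V] [Fintype V]
    (f : Finset V → ℝ) (u w : V) : Prop :=
  ∀ X : Finset V, X ⊂ Finset.univ → (X ∩ ({u, w} : Finset V)).card = 1 → f {w} ≤ f X

/-- The first `k` elements of the ordering. -/
def natPref {V : Type*} [DecidableEq V] {n : ℕ} (v : Fin n → V) (k : ℕ) : Finset V :=
  (Finset.univ.filter (fun j : Fin n => j.val < k)).image v

lemma natPref_succ {V : Type*} [DecidableEq V] {n : ℕ} (v : Fin n → V) (k : ℕ) (hk : k < n) :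
    natPref v (k + 1) = insert (v ⟨k, hk⟩) (natPref v k) := by
  unfold natPref
  rw [← Finset.image_insert]
  congr 1
  ext j
  simp only [mem_filter, mem_univ, true_and, mem_insert, Fin.ext_iff]
  omega

lemma natPref_mem {V : Type*} [DecidableEq V] {n : ℕ} (v : Fin n → V)
    (hv : Function.Injective v) (k : ℕ) (j : Fin n) :
    v j ∈ natPref v k ↔ j.val < k := by
  simp [natPref, hv.eq_iff]

lemma queyranne_key {n : ℕ} {V : Type*} [DecidableEq V] [Fintype V]
    (f : Finset V → ℝ) (hf : Submodular f)
    (v : Fin n → V) (hv : Function.Bijective v) (hord : IsMAOrdering f v) :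
    ∀ k : ℕ, k < n → ∀ u, u ∉ natPref v (k + 1) → ∀ X ⊆ natPref v k,
      f (natPref v (k + 1)) + f {u} ≤ f (natPref v (k + 1) \ X) + f (insert u X) := by
  intro k
  induction k with
  | zero =>
    intro hk u hu X hX
    have : X = ∅ := by
      rw [← Finset.subset_empty]
      simpa [natPref] using hX
    subst this
    simp
  | succ k ih =>
    intro hk u hu X hX
    have hk' : k < n := by omega
    have e1 := natPref_succ v k hk'
    have e2 := natPref_succ v (k + 1) hk
    have hw : v ⟨k + 1, hk⟩ ∉ natPref v (k + 1) := by
      rw [natPref_mem v hv.1]; simp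
    have hz : v ⟨k, hk'⟩ ∉ natPref v k := by
      rw [natPref_mem v hv.1]; simp
    obtain ⟨j, rfl⟩ := hv.2 u
    have hj : k + 2 ≤ j.val := by
      rw [natPref_mem v hv.1] at hu; omega
    have hMA := hord ⟨k + 1, hk⟩ j (by rw [Fin.le_def]; simp; omega)
    have ep : prefSet v ⟨k + 1, hk⟩ = natPref v (k + 1) := rfl
    rw [ep, ← e2] at hMA
    have huP : v j ∉ natPref v (k + 1) := by
      rw [natPref_mem v hv.1]; omega
    generalize v ⟨k + 1, hk⟩ = w at *
    generalize v ⟨k, hk'⟩ = z at *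
    generalize v j = u at *
    generalize natPref v (k + 1 + 1) = R at *
    generalize natPref v (k + 1) = Q at *
    generalize natPref v k = P at *
    by_cases hzX : z ∈ X
    · have h1 := ih hk' w hw (Q \ X) (by grind)
      have h2 := hf (insert u X) Q
      have a1 : Q \ (Q \ X) = X := by grind
      have a2 : insert w (Q \ X) = R \ X := by grind
      have a3 : insert u X ∪ Q = insert u Q := by grind
      have a4 : insert u X ∩ Q = X := by grind
      rw [a1, a2] at h1
      rw [a3, a4] at h2
      linarith
    · have h1 := ih hk' u huP X (by grind)
      have h2 := hf (R \ X) Q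
      have a3 : R \ X ∪ Q = R := by grind
      have a4 : R \ X ∩ Q = Q \ X := by grind
      rw [a3, a4] at h2
      linarith

/-- Queyranne's theorem: for a symmetric submodular `f` and an MA-ordering
`(v_1, …, v_n)` of `V`, the pair `(v_{n-1}, v_n)` is a pendent pair. -/
theorem stmt_6 {n : ℕ} (hn : 2 ≤ n) {V : Type*} [DecidableEq V] [Fintype V]
    (f : Finset V → ℝ) (hsym : ∀ X : Finset V, f X = f Xᶜ) (hf : Submodular f)
    (v : Fin n → V) (hv : Function.Bijective v)
    (hord : IsMAOrdering f v) :
    PendentPair f (v ⟨n - 2, by omega⟩) (v ⟨n - 1, by omega⟩) := by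
  have hm : n - 2 + 1 = n - 1 := by omega
  have hb : v ⟨n - 1, by omega⟩ ∉ natPref v (n - 1) := by
    rw [natPref_mem v hv.1]; simp
  have key := queyranne_key f hf v hv hord (n - 2) (by omega) (v ⟨n - 1, by omega⟩)
    (by rw [hm]; exact hb)
  have es := natPref_succ v (n - 2) (by omega)
  have eu := natPref_succ v (n - 1) (by omega)
  have eall : natPref v (n - 1 + 1) = Finset.univ := by
    rw [Finset.eq_univ_iff_forall]
    intro x
    obtain ⟨j, rfl⟩ := hv.2 x
    rw [natPref_mem v hv.1]; omega
  rw [eall] at eu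
  rw [hm] at key es
  have hab : v ⟨n - 2, by omega⟩ ≠ v ⟨n - 1, by omega⟩ := by
    intro h
    have := hv.1 h
    simp only [Fin.mk.injEq] at this
    omega
  unfold PendentPair
  generalize v ⟨n - 1, by omega⟩ = b at *
  generalize v ⟨n - 2, by omega⟩ = a at *
  generalize natPref v (n - 1) = Q at *
  generalize natPref v (n - 2) = P at *
  have hall : ∀ x, x = b ∨ x ∈ Q := fun x => by
    have := Finset.mem_univ x
    rw [eu] at this
    simpa using this
  have main : ∀ X : Finset V, b ∈ X → a ∉ X → f {b} ≤ f X := by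
    intro X hbX haX
    have h := key (X.erase b) (by
      intro x hx
      have := hall x
      grind)
    have c1 : Q = ({b} : Finset V)ᶜ := by
      ext x; have := hall x; simp only [mem_compl, mem_singleton]; grind
    have c2 : Q \ X.erase b = Xᶜ := by
      ext x; have := hall x; simp only [mem_compl, mem_sdiff, mem_erase]; grind
    have c3 : insert b (X.erase b) = X := Finset.insert_erase hbX
    rw [c2, c3, ← hsym X, c1, ← hsym] at h
    linarith
  intro X _ hX
  by_cases hbX : b ∈ X
  · by_cases haX : a ∈ X
    · exfalso
      have : X ∩ {a, b} = {a, b} := by grind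
      rw [this, Finset.card_pair hab] at hX
      omega
    · exact main X hbX haX
  · by_cases haX : a ∈ X
    · rw [hsym X]
      exact main _ (by simpa using hbX) (by simpa using haX)
    · exfalso
      have : X ∩ {a, b} = ∅ := by grind
      rw [this] at hX
      simp at hX
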